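/- The Terwilliger algebra T(x₀) of the wreath product K_{n_1} ≀ K_{n_2} ≀ ⋯ ≀ K_{n_d} is isomorphic as a ℂ-algebra to M_{d+1}(ℂ) ⊕ ℂ^{⊕ (d(d+1)/2 − b)}, where b = |{i ∈ {1,…,d} : n_i = 2}|. -/

import Mathlib

open Finset Matrix

/-- Vertex set of the wreath product `K_{n 0} ≀ K_{n 1} ≀ ⋯ ≀ K_{n (d-1)}`
(paper indices `n_1, …, n_d` correspond to `n 0, …, n (d-1)`). -/
abbrev Vx (d : ℕ) (n : ℕ → ℕ) : Type := (i : Fin d) → Fin (n i)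

/-- `delta x y = 0` if `x = y`; otherwise `delta x y` is the largest (1-based)
index at which `x` and `y` differ. -/
def delta {d : ℕ} {n : ℕ → ℕ} (x y : Vx d n) : ℕ :=
  (Finset.univ.filter fun i => x i ≠ y i).sup fun i => (i : ℕ) + 1

/-- The `i`-th adjacency matrix of the wreath product: `(A i) x y = 1` iff `delta x y = i`. -/
noncomputable def A (d : ℕ) (n : ℕ → ℕ) (i : ℕ) : Matrix (Vx d n) (Vx d n) ℂ :=
  Matrix.of fun x y => if delta x y = i then 1 else 0

/-- The valencies: `k 0 = 1` and, for `1 ≤ i`, `k i = n_1 ⋯ n_{i-1} (n_i - 1)`,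
i.e. `k i = n 0 ⋯ n (i-2) * (n (i-1) - 1)`. -/
def k (n : ℕ → ℕ) (i : ℕ) : ℕ :=
  if i = 0 then 1 else (∏ j ∈ Finset.range (i - 1), n j) * (n (i - 1) - 1)

/-- The dual idempotent `E_i*` with respect to the base point `x₀`: the diagonal
0-1 matrix with `(E_i*)_{yy} = 1` iff `delta x₀ y = i`. -/
noncomputable def Es {d : ℕ} {n : ℕ → ℕ} (x₀ : Vx d n) (i : ℕ) :
    Matrix (Vx d n) (Vx d n) ℂ :=
  Matrix.of fun y z => if y = z ∧ delta x₀ y = i then 1 else 0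

/-- The all-ones matrix `J`. -/
noncomputable def Jm (d : ℕ) (n : ℕ → ℕ) : Matrix (Vx d n) (Vx d n) ℂ :=
  Matrix.of fun _ _ => 1

/-- The matrices `G i j`. -/
noncomputable def G {d : ℕ} {n : ℕ → ℕ} (x₀ : Vx d n) (i j : ℕ) :
    Matrix (Vx d n) (Vx d n) ℂ :=
  if i < j then ((k n j : ℂ))⁻¹ • (Es x₀ i * A d n j * Es x₀ j)
  else if j < i then ((k n j : ℂ))⁻¹ • (Es x₀ i * A d n i * Es x₀ j)
  else ((k n i : ℂ))⁻¹ • (Es x₀ i * Jm d n * Es x₀ i)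

/-- The span `U` of the matrices `G i j`, `i, j ∈ [d]`. -/
noncomputable def Uspan {d : ℕ} {n : ℕ → ℕ} (x₀ : Vx d n) :
    Submodule ℂ (Matrix (Vx d n) (Vx d n) ℂ) :=
  Submodule.span ℂ (Set.range fun p : Fin (d + 1) × Fin (d + 1) => G x₀ p.1 p.2)

/-- The Terwilliger algebra of the wreath product with respect to `x₀`. -/
noncomputable def Ter {d : ℕ} {n : ℕ → ℕ} (x₀ : Vx d n) :
    Subalgebra ℂ (Matrix (Vx d n) (Vx d n) ℂ) :=
  Algebra.adjoin ℂ
    ((Set.range fun i : Fin (d + 1) => A d n i) ∪ (Set.range fun i : Fin (d + 1) => Es x₀ i))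

/-- The matrices `F i h`, for `1 ≤ i ≤ d` and `0 ≤ h ≤ i - 1`. -/
noncomputable def F {d : ℕ} {n : ℕ → ℕ} (x₀ : Vx d n) (i h : ℕ) :
    Matrix (Vx d n) (Vx d n) ℂ :=
  if h < i - 1 then
    (∑ j ∈ Finset.range (h + 1), (k n j : ℂ))⁻¹ •
        (∑ j ∈ Finset.range (h + 1), Es x₀ i * A d n j * Es x₀ i)
      - (∑ j ∈ Finset.range (h + 2), (k n j : ℂ))⁻¹ •
          (∑ j ∈ Finset.range (h + 2), Es x₀ i * A d n j * Es x₀ i)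
  else
    (∑ j ∈ Finset.range i, (k n j : ℂ))⁻¹ •
        (∑ j ∈ Finset.range i, Es x₀ i * A d n j * Es x₀ i)
      - G x₀ i i

/-!
The function `delta` is an ultrametric, so the sphere of radius `i` about `x₀` is partitioned, for
each `h`, into clusters of radius `h`, and these partitions coarsen as `h` grows: from singletons
at `h = 0` to the whole sphere at `h = i`. The matrices averaging over clusters are therefore
projections with `P_h * P_g = P_(max h g)`, and their consecutive differences are the orthogonal
idempotents `F i h`. Points of different spheres have distance the larger of the two radii, so all
off-diagonal blocks of the `A j` are constant; they give matrix units `G i j`, where `G i i` is the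
coarsest average on the sphere of radius `i`. Together the `G i i` and `F i h` add up to `1`, and
the `G i j` and `F i h` generate the Terwilliger algebra. Finally `F i h = 0` exactly when clusters
of radius `h` and `h + 1` have the same size, which happens only for a sphere of radius `i = h + 1`
consisting of a single ball of radius `h`, that is, for `n h = 2` in the 0-based indexing of `n`.
-/

lemma adjoin_union_range_ne_zero {K R κ : Type*} [CommSemiring K] [Semiring R] [Algebra K R]
    (s : Set R) (f : κ → R) :
    Algebra.adjoin K (s ∪ Set.range fun a : {a // f a ≠ 0} => f a) =
      Algebra.adjoin K (s ∪ Set.range f) := by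
  refine le_antisymm (Algebra.adjoin_mono ?_) (Algebra.adjoin_le ?_)
  · exact Set.union_subset_union_right s (Set.range_comp_subset_range Subtype.val f)
  · rintro _ (hx | ⟨a, rfl⟩)
    · exact Algebra.subset_adjoin (Or.inl hx)
    · by_cases ha : f a = 0
      · simp only [ha, zero_mem, SetLike.mem_coe]
      · exact Algebra.subset_adjoin (Or.inr ⟨⟨a, ha⟩, rfl⟩)

section SplitFrame

variable {K R ι κ : Type*} [Fintype ι] [DecidableEq ι] [Fintype κ]

/-- A decomposition of `1` in a ring into the diagonal of a system of matrix units `g` and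
orthogonal idempotents `f` annihilating `g`. Over a field `K` such a family spans a copy of
`Matrix ι ι K × (κ → K)`, provided none of its members vanishes; members `f a = 0` are allowed
here and contribute nothing. -/
structure IsSplitFrame [Ring R] (g : ι → ι → R) (f : κ → R) : Prop where
  unit_mul_unit : ∀ i j l m, g i j * g l m = if j = l then g i m else 0
  orthogonal : OrthogonalIdempotents f
  unit_mul_idem : ∀ i j a, g i j * f a = 0
  idem_mul_unit : ∀ a i j, f a * g i j = 0
  sum_eq_one : ∑ i, g i i + ∑ a, f a = 1

variable (K) in
/-- The linear map sending the standard basis of `Matrix ι ι K × (κ → K)` to the families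
`g` and `f`. -/
def frameLinearMap [CommRing K] [Ring R] [Algebra K R] (g : ι → ι → R) (f : κ → R) :
    Matrix ι ι K × (κ → K) →ₗ[K] R :=
  (Matrix.liftLinear K fun i j => LinearMap.toSpanSingleton K R (g i j)).coprod
    (Fintype.linearCombination K f)

lemma frameLinearMap_apply [CommRing K] [Ring R] [Algebra K R] (g : ι → ι → R) (f : κ → R)
    (p : Matrix ι ι K × (κ → K)) :
    frameLinearMap K g f p = ∑ i, ∑ j, p.1 i j • g i j + ∑ a, p.2 a • f a := by
  simp [frameLinearMap, Matrix.liftLinear_apply, Fintype.linearCombination_apply]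

namespace IsSplitFrame

variable [CommRing K] [Ring R] [Algebra K R] {g : ι → ι → R} {f : κ → R}

lemma frameLinearMap_one (h : IsSplitFrame g f) : frameLinearMap K g f 1 = 1 := by
  simp [frameLinearMap_apply, ← h.sum_eq_one, Matrix.one_apply, ite_smul]

lemma sum_unit_mul_sum_unit (h : IsSplitFrame g f) (M N : Matrix ι ι K) :
    (∑ i, ∑ j, M i j • g i j) * ∑ i, ∑ j, N i j • g i j = ∑ i, ∑ j, (M * N) i j • g i j := by
  have unit_mul_sum (i j : ι) : g i j * ∑ l, ∑ m, N l m • g l m = ∑ m, N j m • g i m := by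
    rw [sum_comm]
    simp [mul_sum, h.unit_mul_unit]
  simp only [sum_mul, smul_mul_assoc, unit_mul_sum, smul_sum, smul_smul, Matrix.mul_apply,
    sum_smul]
  exact sum_congr rfl fun i _ => sum_comm

lemma frameLinearMap_mul (h : IsSplitFrame g f) (p q : Matrix ι ι K × (κ → K)) :
    frameLinearMap K g f (p * q) = frameLinearMap K g f p * frameLinearMap K g f q := by
  classical
  have idem_part : (∑ a, p.2 a • f a) * ∑ a, q.2 a • f a = ∑ a, (p * q).2 a • f a := by
    simp [sum_mul, mul_sum, h.orthogonal.mul_eq, smul_smul, mul_comm]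
  have cross_left : (∑ i, ∑ j, p.1 i j • g i j) * ∑ a, q.2 a • f a = 0 := by
    simp [sum_mul, mul_sum, h.unit_mul_idem]
  have cross_right : (∑ a, p.2 a • f a) * ∑ i, ∑ j, q.1 i j • g i j = 0 := by
    simp [sum_mul, mul_sum, h.idem_mul_unit]
  simp only [frameLinearMap_apply, add_mul, mul_add, h.sum_unit_mul_sum_unit, cross_left,
    cross_right, idem_part, add_zero, zero_add, Prod.fst_mul]

variable (K) in
/-- The linear map attached to a split frame, as an algebra homomorphism. -/
def algHom (h : IsSplitFrame g f) : Matrix ι ι K × (κ → K) →ₐ[K] R :=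
  AlgHom.ofLinearMap (frameLinearMap K g f) h.frameLinearMap_one h.frameLinearMap_mul

lemma algHom_apply (h : IsSplitFrame g f) (p : Matrix ι ι K × (κ → K)) :
    h.algHom K p = ∑ i, ∑ j, p.1 i j • g i j + ∑ a, p.2 a • f a :=
  frameLinearMap_apply g f p

lemma idem_mul_algHom (h : IsSplitFrame g f) (a : κ) (p : Matrix ι ι K × (κ → K)) :
    f a * h.algHom K p = p.2 a • f a := by
  classical
  simp [algHom_apply, mul_add, mul_sum, h.idem_mul_unit, h.orthogonal.mul_eq]

lemma unit_mul_algHom_mul_unit (h : IsSplitFrame g f) (i j : ι) (p : Matrix ι ι K × (κ → K)) :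
    g i i * h.algHom K p * g j j = p.1 i j • g i j := by
  simp [algHom_apply, mul_add, mul_sum, sum_mul, h.unit_mul_idem, h.unit_mul_unit]

lemma algHom_injective {K : Type*} [Field K] [Algebra K R] (h : IsSplitFrame g f)
    (hg : ∀ i j, g i j ≠ 0) (hf : ∀ a, f a ≠ 0) :
    Function.Injective (h.algHom K) := by
  rw [injective_iff_map_eq_zero]
  intro p hp
  refine Prod.ext (Matrix.ext fun i j => ?_) (funext fun a => ?_)
  · simpa [hp, hg] using (h.unit_mul_algHom_mul_unit i j p).symm
  · simpa [hp, hf] using (h.idem_mul_algHom a p).symm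

lemma range_algHom (h : IsSplitFrame g f) :
    (h.algHom K).range =
      Algebra.adjoin K (Set.range (fun p : ι × ι => g p.1 p.2) ∪ Set.range f) := by
  classical
  apply le_antisymm
  · rintro _ ⟨p, rfl⟩
    rw [AlgHom.toRingHom_eq_coe, RingHom.coe_coe, algHom_apply]
    refine add_mem (sum_mem fun i _ => sum_mem fun j _ => ?_) (sum_mem fun a _ => ?_) <;>
      refine Subalgebra.smul_mem _ (Algebra.subset_adjoin ?_) _
    · exact Or.inl ⟨(i, j), rfl⟩
    · exact Or.inr ⟨a, rfl⟩
  · refine Algebra.adjoin_le ?_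
    rintro _ (⟨⟨i, j⟩, rfl⟩ | ⟨a, rfl⟩)
    · exact ⟨(Matrix.single i j 1, 0), by simp [algHom, frameLinearMap]⟩
    · exact ⟨(0, Pi.single a 1), by simp [algHom, frameLinearMap]⟩

lemma restrict_ne_zero [Fintype {a // f a ≠ 0}] (h : IsSplitFrame g f) :
    IsSplitFrame g fun a : {a // f a ≠ 0} => f a where
  unit_mul_unit := h.unit_mul_unit
  orthogonal := h.orthogonal.embedding (Function.Embedding.subtype _)
  unit_mul_idem i j a := h.unit_mul_idem i j a
  idem_mul_unit a := h.idem_mul_unit a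
  sum_eq_one := by
    classical
    rw [← h.sum_eq_one, ← sum_filter_ne_zero (f := f) univ,
      sum_subtype (p := fun a => f a ≠ 0) _ (by simp)]

theorem nonempty_adjoin_algEquiv (K : Type*) [Field K] [Algebra K R] (h : IsSplitFrame g f)
    (hg : ∀ i j, g i j ≠ 0) :
    Nonempty (Algebra.adjoin K (Set.range (fun p : ι × ι => g p.1 p.2) ∪ Set.range f) ≃ₐ[K]
      Matrix ι ι K × ({a // f a ≠ 0} → K)) := by
  classical
  exact ⟨((AlgEquiv.ofInjective _ (h.restrict_ne_zero.algHom_injective hg fun a => a.2)).trans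
    (Subalgebra.equivOfEq _ _ (h.restrict_ne_zero.range_algHom.trans
      (adjoin_union_range_ne_zero _ f)))).symm⟩

end IsSplitFrame

end SplitFrame

section MaxFamily

variable {R : Type*} [NonUnitalRing R] {p : ℕ → R}

lemma sub_succ_mul_of_mul_eq_max (hp : ∀ h g, p h * p g = p (max h g)) {h g : ℕ} (hhg : h < g) :
    (p h - p (h + 1)) * p g = 0 := by
  rw [sub_mul, hp, hp, max_eq_right hhg.le, max_eq_right hhg, sub_self]

lemma mul_sub_succ_of_mul_eq_max (hp : ∀ h g, p h * p g = p (max h g)) {h g : ℕ} (hhg : h < g) :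
    p g * (p h - p (h + 1)) = 0 := by
  rw [mul_sub, hp, hp, max_eq_left hhg.le, max_eq_left hhg, sub_self]

lemma sub_succ_mul_sub_succ_of_mul_eq_max (hp : ∀ h g, p h * p g = p (max h g)) (h g : ℕ) :
    (p h - p (h + 1)) * (p g - p (g + 1)) = if h = g then p h - p (h + 1) else 0 := by
  rcases lt_trichotomy h g with hlt | rfl | hgt
  · rw [mul_sub, sub_succ_mul_of_mul_eq_max hp hlt, sub_succ_mul_of_mul_eq_max hp (by omega),
      sub_zero, if_neg hlt.ne]
  · rw [mul_sub, sub_succ_mul_of_mul_eq_max hp h.lt_succ_self, sub_mul, hp, hp, if_pos rfl]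
    simp
  · rw [sub_mul, mul_sub_succ_of_mul_eq_max hp hgt, mul_sub_succ_of_mul_eq_max hp (by omega),
      sub_zero, if_neg hgt.ne']

end MaxFamily

section AvgMatrix

lemma rel_iff_rel_of_rel {X : Type*} {r : X → X → Prop} [Std.Symm r] [IsTrans X r] {x y : X}
    (hxy : r x y) (z : X) :
    r x z ↔ r y z :=
  ⟨_root_.trans (symm hxy), _root_.trans hxy⟩

variable {K X : Type*} [Field K] [Fintype X]
  {r s : X → X → Prop} [DecidableRel r] [DecidableRel s]

variable (K) in
/-- The matrix averaging a function over the classes of a partial equivalence relation `r`, and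
killing it outside the domain `{x | r x x}`. -/
def avgMatrix (r : X → X → Prop) [DecidableRel r] : Matrix X X K :=
  Matrix.of fun x y => if r x y then (#{z | r x z} : K)⁻¹ else 0

lemma avgMatrix_apply (x y : X) :
    avgMatrix K r x y = if r x y then (#{z | r x z} : K)⁻¹ else 0 :=
  rfl

lemma avgMatrix_transpose [Std.Symm r] [IsTrans X r] :
    (avgMatrix K r)ᵀ = avgMatrix K r := by
  ext x y
  rw [Matrix.transpose_apply, avgMatrix_apply, avgMatrix_apply]
  by_cases hxy : r x y
  · rw [if_pos hxy, if_pos (symm hxy)]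
    simp only [rel_iff_rel_of_rel hxy]
  · rw [if_neg hxy, if_neg fun hyx => hxy (symm hyx)]

lemma avgMatrix_mul_avgMatrix_of_disjoint (hrs : ∀ x y z, r x y → ¬ s y z) :
    avgMatrix K r * avgMatrix K s = 0 := by
  ext x z
  refine sum_eq_zero fun y _ => ?_
  by_cases hxy : r x y
  · simp [avgMatrix_apply, hrs x y z hxy]
  · simp [avgMatrix_apply, hxy]

variable [CharZero K]

lemma avgMatrix_mul_avgMatrix_of_le [Std.Symm s] [IsTrans X s]
    (hle : ∀ x y, r x y → s x y) (hdom : ∀ x y, s x y → r x x) :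
    avgMatrix K r * avgMatrix K s = avgMatrix K s := by
  ext x z
  have row_eq (y : X) (hxy : r x y) : avgMatrix K s y z = avgMatrix K s x z := by
    simp only [avgMatrix_apply, rel_iff_rel_of_rel (hle x y hxy)]
  have row_sum : (avgMatrix K r * avgMatrix K s) x z =
      #{y | r x y} * (#{y | r x y} : K)⁻¹ * avgMatrix K s x z := by
    rw [Matrix.mul_apply, mul_assoc, ← nsmul_eq_mul, ← sum_const, sum_filter]
    refine sum_congr rfl fun y _ => ?_
    by_cases hxy : r x y
    · rw [row_eq y hxy, avgMatrix_apply, if_pos hxy, if_pos hxy]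
    · rw [avgMatrix_apply, if_neg hxy, if_neg hxy, zero_mul]
  rw [row_sum]
  by_cases hxz : s x z
  · have card_ne : (#{y | r x y} : K) ≠ 0 :=
      Nat.cast_ne_zero.2 (card_ne_zero_of_mem (mem_filter.2 ⟨mem_univ x, hdom x z hxz⟩))
    rw [mul_inv_cancel₀ card_ne, one_mul]
  · simp [avgMatrix_apply, hxz]

lemma avgMatrix_mul_avgMatrix_of_ge [Std.Symm r] [IsTrans X r] [Std.Symm s] [IsTrans X s]
    (hle : ∀ x y, r x y → s x y) (hdom : ∀ x y, s x y → r x x) :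
    avgMatrix K s * avgMatrix K r = avgMatrix K s := by
  have := congrArg Matrix.transpose (avgMatrix_mul_avgMatrix_of_le (K := K) hle hdom)
  rwa [Matrix.transpose_mul, avgMatrix_transpose, avgMatrix_transpose] at this

lemma avgMatrix_eq_avgMatrix_iff_card_eq (hle : ∀ x y, r x y → s x y)
    (hdom : ∀ x y, s x y → r x x) :
    avgMatrix K r = avgMatrix K s ↔ ∀ x, #{y | r x y} = #{y | s x y} := by
  constructor
  · intro heq x
    by_cases hx : r x x
    · have := congrFun (congrFun heq x) x
      rwa [avgMatrix_apply, avgMatrix_apply, if_pos hx, if_pos (hle x x hx), _root_.inv_inj,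
        Nat.cast_inj] at this
    · rw [filter_false_of_mem fun y _ hxy => hx (hdom x y (hle x y hxy)),
        filter_false_of_mem fun y _ hxy => hx (hdom x y hxy)]
  · intro hcard
    have class_eq (x : X) : univ.filter (r x) = univ.filter (s x) :=
      eq_of_subset_of_card_le (monotone_filter_right _ fun y _ => hle x y) (hcard x).ge
    have rel_iff (x y : X) : r x y ↔ s x y := by simpa using Finset.ext_iff.1 (class_eq x) y
    ext x y
    simp only [avgMatrix_apply, rel_iff]

end AvgMatrix

section Delta

variable {d : ℕ} {n : ℕ → ℕ}

lemma delta_le_iff {x y : Vx d n} {h : ℕ} :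
    delta x y ≤ h ↔ ∀ i : Fin d, h ≤ i → x i = y i := by
  simp only [delta, Finset.sup_le_iff, mem_filter, mem_univ, true_and, Nat.succ_le_iff]
  exact forall_congr' fun i => by rw [not_imp_comm, not_lt]

lemma delta_eq_zero_iff {x y : Vx d n} : delta x y = 0 ↔ x = y := by
  rw [← Nat.le_zero, delta_le_iff, funext_iff]
  simp only [zero_le, forall_const]

lemma delta_eq_succ_iff {x y : Vx d n} {i : Fin d} :
    delta x y = i + 1 ↔ x i ≠ y i ∧ ∀ j, i < j → x j = y j := by
  have split : delta x y = i + 1 ↔ ¬ delta x y ≤ i ∧ delta x y ≤ i + 1 := by omega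
  rw [split, delta_le_iff, delta_le_iff]
  refine and_congr_left fun hgt => not_congr ⟨fun heq => heq i le_rfl, fun heq j hij => ?_⟩
  rcases (Fin.le_def.2 hij).eq_or_lt with rfl | hij
  · exact heq
  · exact hgt j hij

lemma delta_comm (x y : Vx d n) : delta x y = delta y x := by
  simp only [delta, ne_comm]

lemma delta_le_dim (x y : Vx d n) : delta x y ≤ d :=
  delta_le_iff.2 fun i hi => absurd i.2 hi.not_gt

lemma delta_le_max (x y z : Vx d n) : delta x z ≤ max (delta x y) (delta y z) :=
  delta_le_iff.2 fun i hi =>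
    (delta_le_iff.1 (le_max_left _ _) i hi).trans (delta_le_iff.1 (le_max_right _ _) i hi)

lemma delta_eq_max_of_ne {x y z : Vx d n} (hne : delta x y ≠ delta x z) :
    delta y z = max (delta x y) (delta x z) := by
  have := delta_le_max y x z
  have := delta_le_max x y z
  have := delta_le_max x z y
  rw [delta_comm y x] at *
  rw [delta_comm z y] at *
  omega

lemma delta_eq_of_delta_lt {x y z : Vx d n} (hlt : delta y z < delta x y) :
    delta x z = delta x y := by
  by_contra hne
  have := delta_eq_max_of_ne (Ne.symm hne)
  omega

lemma filter_delta_eq_succ (x : Vx d n) (i : Fin d) :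
    ({y | delta x y = i + 1} : Finset (Vx d n)) = Fintype.piFinset fun j : Fin d =>
      if (j : ℕ) < i then univ else if (j : ℕ) = i then {x j}ᶜ else {x j} := by
  ext y
  simp only [mem_filter, mem_univ, true_and, delta_eq_succ_iff, Fintype.mem_piFinset]
  constructor
  · rintro ⟨hne, heq⟩ j
    rcases lt_trichotomy j i with hji | rfl | hij
    · simp [hji]
    · simpa using hne.symm
    · simp [hij.not_gt, Fin.val_ne_of_ne hij.ne', heq j hij]
  · intro hy
    refine ⟨?_, fun j hij => ?_⟩
    · simpa [eq_comm] using hy i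
    · simpa [hij.not_gt, Fin.val_ne_of_ne hij.ne', eq_comm] using hy j

lemma card_sphere (x : Vx d n) {i : ℕ} (hi : i ≤ d) : #{y | delta x y = i} = k n i := by
  cases i with
  | zero => simp [delta_eq_zero_iff, k, filter_eq]
  | succ i =>
    let choices (j : ℕ) : ℕ := if j < i then n j else if j = i then n j - 1 else 1
    calc #{y | delta x y = i + 1}
        = ∏ j : Fin d, choices j := by
          rw [filter_delta_eq_succ x ⟨i, hi⟩, Fintype.card_piFinset]
          refine prod_congr rfl fun j _ => ?_
          simp only [choices, apply_ite card, card_univ, Fintype.card_fin, card_compl,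
            card_singleton]
      _ = ∏ j ∈ range (i + 1), choices j := by
          rw [Fin.prod_univ_eq_prod_range choices d]
          refine (prod_subset (range_subset_range.2 hi) fun j _ hj => ?_).symm
          rw [mem_range, Nat.lt_succ_iff, not_le] at hj
          simp only [choices, if_neg hj.not_gt, if_neg hj.ne']
      _ = k n (i + 1) := by
          rw [prod_range_succ, prod_congr rfl fun j hj => if_pos (mem_range.1 hj)]
          simp [choices, k]

lemma card_ball (x : Vx d n) {h : ℕ} (hh : h ≤ d) :
    #{y | delta x y ≤ h} = ∑ j ∈ range (h + 1), k n j := by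
  rw [card_eq_sum_card_fiberwise (f := delta x) (t := range (h + 1))]
  · refine sum_congr rfl fun j hj => ?_
    rw [mem_range] at hj
    rw [filter_filter, ← card_sphere x (by omega : j ≤ d)]
    exact congrArg card (filter_congr fun y _ => by omega)
  · intro y hy
    simpa [Nat.lt_succ_iff] using hy

lemma k_ne_zero {i : ℕ} (hn : ∀ j < i, 2 ≤ n j) : k n i ≠ 0 := by
  cases i with
  | zero => simp [k]
  | succ i =>
    have := hn i i.lt_succ_self
    rw [k, if_neg i.succ_ne_zero, Nat.add_sub_cancel]
    refine mul_ne_zero (prod_ne_zero_iff.2 fun j hj => ?_) (by omega)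
    have := hn j (by rw [mem_range] at hj; omega)
    omega

lemma sum_k_eq_prod {h : ℕ} (hn : ∀ j < h, 1 ≤ n j) :
    ∑ j ∈ range (h + 1), k n j = ∏ j ∈ range h, n j := by
  induction h with
  | zero => simp [k]
  | succ h ih =>
    obtain ⟨m, hm⟩ := Nat.exists_eq_add_of_le' (hn h h.lt_succ_self)
    rw [sum_range_succ, ih fun j hj => hn j (by omega), prod_range_succ, k,
      if_neg h.succ_ne_zero, Nat.add_sub_cancel, hm, Nat.add_sub_cancel]
    ring

lemma exists_delta_eq (hn : ∀ i < d, 2 ≤ n i) (x : Vx d n) {i : ℕ} (hi : i ≤ d) :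
    ∃ y, delta x y = i := by
  have : #{y | delta x y = i} ≠ 0 := by
    rw [card_sphere x hi]
    exact k_ne_zero fun j hj => hn j (hj.trans_le hi)
  obtain ⟨y, hy⟩ := card_ne_zero.1 this
  exact ⟨y, (mem_filter.1 hy).2⟩

end Delta

section Cluster

variable {d : ℕ} {n : ℕ → ℕ}

/-- `y` and `z` lie in the same cluster of radius `h` of the sphere `{w | delta x₀ w = i}`. The
clusters are the traces on the sphere of the balls of radius `h`: whole balls for `h < i`, the
whole sphere for `i ≤ h`. -/
def SameCluster (x₀ : Vx d n) (i h : ℕ) (y z : Vx d n) : Prop :=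
  delta x₀ y = i ∧ delta x₀ z = i ∧ delta y z ≤ h

instance (x₀ : Vx d n) (i h : ℕ) : DecidableRel (SameCluster x₀ i h) := fun _ _ =>
  inferInstanceAs (Decidable (_ ∧ _ ∧ _))

instance (x₀ : Vx d n) (i h : ℕ) : Std.Symm (SameCluster x₀ i h) where
  symm _ _ := fun ⟨hy, hz, hyz⟩ => ⟨hz, hy, delta_comm _ _ ▸ hyz⟩

instance (x₀ : Vx d n) (i h : ℕ) : IsTrans (Vx d n) (SameCluster x₀ i h) where
  trans _ w _ := fun ⟨hy, _, hyw⟩ ⟨_, hz, hwz⟩ =>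
    ⟨hy, hz, (delta_le_max _ w _).trans (max_le hyw hwz)⟩

lemma SameCluster.mono {x₀ y z : Vx d n} {i h g : ℕ} (hhg : h ≤ g)
    (hyz : SameCluster x₀ i h y z) : SameCluster x₀ i g y z :=
  ⟨hyz.1, hyz.2.1, hyz.2.2.trans hhg⟩

lemma sameCluster_self {x₀ y : Vx d n} {i : ℕ} (h : ℕ) (hy : delta x₀ y = i) :
    SameCluster x₀ i h y y :=
  ⟨hy, hy, (delta_eq_zero_iff.2 rfl).trans_le h.zero_le⟩

lemma sameCluster_iff_of_le {x₀ y z : Vx d n} {i h : ℕ} (hih : i ≤ h) :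
    SameCluster x₀ i h y z ↔ delta x₀ y = i ∧ delta x₀ z = i := by
  refine ⟨fun hyz => ⟨hyz.1, hyz.2.1⟩, fun ⟨hy, hz⟩ => ⟨hy, hz, ?_⟩⟩
  have := delta_le_max y x₀ z
  rw [delta_comm y x₀] at this
  omega

lemma sameCluster_iff_of_lt {x₀ y z : Vx d n} {i h : ℕ} (hhi : h < i) (hy : delta x₀ y = i) :
    SameCluster x₀ i h y z ↔ delta y z ≤ h :=
  ⟨fun hyz => hyz.2.2, fun hyz => ⟨hy, (delta_eq_of_delta_lt (by omega)).trans hy, hyz⟩⟩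

/-- The common size of the clusters of radius `h` of a sphere of radius `i`. -/
def clusterSize (n : ℕ → ℕ) (i h : ℕ) : ℕ :=
  if h < i then ∑ j ∈ range (h + 1), k n j else k n i

lemma card_cluster {x₀ y : Vx d n} {i : ℕ} (h : ℕ) (hi : i ≤ d) (hy : delta x₀ y = i) :
    #{z | SameCluster x₀ i h y z} = clusterSize n i h := by
  rw [clusterSize]
  split_ifs with hhi
  · simp only [sameCluster_iff_of_lt hhi hy, card_ball y (hhi.le.trans hi)]
  · simp only [sameCluster_iff_of_le (not_lt.1 hhi), hy, true_and, card_sphere x₀ hi]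

lemma clusterSize_ne_zero (hn : ∀ i < d, 2 ≤ n i) (x₀ : Vx d n) {i : ℕ} (h : ℕ) (hi : i ≤ d) :
    clusterSize n i h ≠ 0 := by
  obtain ⟨y, hy⟩ := exists_delta_eq hn x₀ hi
  rw [← card_cluster h hi hy]
  exact card_ne_zero_of_mem (mem_filter.2 ⟨mem_univ y, sameCluster_self h hy⟩)

lemma clusterSize_eq_clusterSize_succ_iff {i h : ℕ} (hn : ∀ j < i, 2 ≤ n j) (hhi : h < i) :
    clusterSize n i h = clusterSize n i (h + 1) ↔ h + 1 = i ∧ n h = 2 := by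
  rw [clusterSize, if_pos hhi, clusterSize]
  split_ifs with hlt
  · have := k_ne_zero (n := n) (i := h + 1) fun j hj => hn j (by omega)
    rw [sum_range_succ _ (h + 1)]
    omega
  · obtain rfl : h + 1 = i := by omega
    have prod_pos : 0 < ∏ j ∈ range h, n j :=
      prod_pos fun j hj => by have := hn j (by rw [mem_range] at hj; omega); omega
    rw [sum_k_eq_prod fun j hj => by have := hn j (by omega); omega, k, if_neg h.succ_ne_zero,
      Nat.add_sub_cancel, left_eq_mul₀ prod_pos.ne']
    omega

/-- The orthogonal projection of the functions on the sphere `{w | delta x₀ w = i}` onto those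
constant on its clusters of radius `h`. -/
noncomputable def clusterAvg (x₀ : Vx d n) (i h : ℕ) : Matrix (Vx d n) (Vx d n) ℂ :=
  avgMatrix ℂ (SameCluster x₀ i h)

lemma clusterAvg_apply (x₀ : Vx d n) {i : ℕ} (h : ℕ) (hi : i ≤ d) (y z : Vx d n) :
    clusterAvg x₀ i h y z =
      if SameCluster x₀ i h y z then (clusterSize n i h : ℂ)⁻¹ else 0 := by
  rw [clusterAvg, avgMatrix_apply]
  split_ifs with hyz
  · rw [card_cluster h hi hyz.1]
  · rfl

lemma clusterAvg_mul_clusterAvg_same (x₀ : Vx d n) (i h g : ℕ) :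
    clusterAvg x₀ i h * clusterAvg x₀ i g = clusterAvg x₀ i (max h g) := by
  have dom {h g : ℕ} (y z : Vx d n) (hyz : SameCluster x₀ i g y z) : SameCluster x₀ i h y y :=
    sameCluster_self h hyz.1
  rcases le_total h g with hhg | hgh
  · rw [max_eq_right hhg]
    exact avgMatrix_mul_avgMatrix_of_le (fun _ _ => .mono hhg) dom
  · rw [max_eq_left hgh]
    exact avgMatrix_mul_avgMatrix_of_ge (fun _ _ => .mono hgh) dom

lemma clusterAvg_mul_clusterAvg_of_ne (x₀ : Vx d n) {i j : ℕ} (h g : ℕ) (hij : i ≠ j) :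
    clusterAvg x₀ i h * clusterAvg x₀ j g = 0 :=
  avgMatrix_mul_avgMatrix_of_disjoint fun _ _ _ hxy hyz => hij (hxy.2.1.symm.trans hyz.1)

lemma clusterAvg_eq_clusterAvg_succ_iff (hn : ∀ i < d, 2 ≤ n i) (x₀ : Vx d n) {i h : ℕ}
    (hi : i ≤ d) (hhi : h < i) :
    clusterAvg x₀ i h = clusterAvg x₀ i (h + 1) ↔ h + 1 = i ∧ n h = 2 := by
  rw [← clusterSize_eq_clusterSize_succ_iff (fun j hj => hn j (hj.trans_le hi)) hhi, clusterAvg,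
    clusterAvg, avgMatrix_eq_avgMatrix_iff_card_eq (fun _ _ => .mono h.le_succ)
      fun _ _ hyz => sameCluster_self h hyz.1]
  constructor
  · intro hcard
    obtain ⟨y, hy⟩ := exists_delta_eq hn x₀ hi
    rw [← card_cluster h hi hy, ← card_cluster (h + 1) hi hy, hcard y]
  · intro hsize y
    by_cases hy : delta x₀ y = i
    · rw [card_cluster h hi hy, card_cluster (h + 1) hi hy, hsize]
    · simp [SameCluster, hy]

end Cluster

section MatrixUnits

variable {d : ℕ} {n : ℕ → ℕ}

lemma Es_eq_diagonal (x₀ : Vx d n) (i : ℕ) :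
    Es x₀ i = Matrix.diagonal fun y => if delta x₀ y = i then 1 else 0 := by
  ext y z
  rw [Es, Matrix.of_apply, Matrix.diagonal_apply, ite_and]

lemma Es_mul_mul_Es_apply (x₀ : Vx d n) (i j : ℕ) (M : Matrix (Vx d n) (Vx d n) ℂ)
    (y z : Vx d n) :
    (Es x₀ i * M * Es x₀ j) y z =
      if delta x₀ y = i ∧ delta x₀ z = j then M y z else 0 := by
  rw [Es_eq_diagonal, Es_eq_diagonal, Matrix.mul_diagonal, Matrix.diagonal_mul, ite_and]
  split_ifs <;> simp

lemma sum_Es (x₀ : Vx d n) : ∑ i ∈ range (d + 1), Es x₀ i = 1 := by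
  ext y z
  have hy : delta x₀ y < d + 1 := Nat.lt_succ_of_le (delta_le_dim x₀ y)
  simp [Matrix.sum_apply, Es, Matrix.one_apply, ite_and, hy]

lemma sum_A : ∑ j ∈ range (d + 1), A d n j = Jm d n := by
  ext y z
  have hyz : delta y z < d + 1 := Nat.lt_succ_of_le (delta_le_dim y z)
  simp [Matrix.sum_apply, A, Jm, hyz]

lemma A_apply_of_delta_ne {x₀ y z : Vx d n} {i j : ℕ} (l : ℕ) (hij : i ≠ j)
    (hy : delta x₀ y = i) (hz : delta x₀ z = j) :
    A d n l y z = if max i j = l then 1 else 0 := by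
  subst hy hz
  rw [A, Matrix.of_apply, delta_eq_max_of_ne hij]

lemma G_apply (x₀ : Vx d n) (i j : ℕ) (y z : Vx d n) :
    G x₀ i j y z = if delta x₀ y = i ∧ delta x₀ z = j then (k n j : ℂ)⁻¹ else 0 := by
  rcases lt_trichotomy i j with hij | rfl | hji
  · rw [G, if_pos hij, Matrix.smul_apply, Es_mul_mul_Es_apply, smul_ite, smul_zero]
    refine if_ctx_congr Iff.rfl (fun hyz => ?_) fun _ => rfl
    rw [A_apply_of_delta_ne j hij.ne hyz.1 hyz.2, if_pos (max_eq_right hij.le), smul_eq_mul,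
      mul_one]
  · simp [G, Jm, Es_mul_mul_Es_apply]
  · rw [G, if_neg hji.not_gt, if_pos hji, Matrix.smul_apply, Es_mul_mul_Es_apply, smul_ite,
      smul_zero]
    refine if_ctx_congr Iff.rfl (fun hyz => ?_) fun _ => rfl
    rw [A_apply_of_delta_ne i hji.ne' hyz.1 hyz.2, if_pos (max_eq_left hji.le), smul_eq_mul,
      mul_one]

lemma G_mul_G (hn : ∀ i < d, 2 ≤ n i) (x₀ : Vx d n) (i : ℕ) {j : ℕ} (hj : j ≤ d) (l m : ℕ) :
    G x₀ i j * G x₀ l m = if j = l then G x₀ i m else 0 := by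
  ext y z
  rw [Matrix.mul_apply]
  split_ifs with hjl
  · subst hjl
    have k_ne : (k n j : ℂ) ≠ 0 :=
      Nat.cast_ne_zero.2 (k_ne_zero fun i hi => hn i (hi.trans_le hj))
    have term (w : Vx d n) : G x₀ i j y w * G x₀ j m w z =
        if delta x₀ w = j then (k n j : ℂ)⁻¹ * G x₀ i m y z else 0 := by
      simp only [G_apply]
      split_ifs <;> simp_all
    rw [sum_congr rfl fun w _ => term w, ← sum_filter, sum_const, card_sphere x₀ hj, nsmul_eq_mul,
      mul_inv_cancel_left₀ k_ne]
  · refine sum_eq_zero fun w _ => ?_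
    simp only [G_apply]
    split_ifs <;> simp_all

lemma G_ne_zero (hn : ∀ i < d, 2 ≤ n i) (x₀ : Vx d n) {i j : ℕ} (hi : i ≤ d) (hj : j ≤ d) :
    G x₀ i j ≠ 0 := by
  obtain ⟨y, hy⟩ := exists_delta_eq hn x₀ hi
  obtain ⟨z, hz⟩ := exists_delta_eq hn x₀ hj
  intro hG
  have entry_zero := congrFun (congrFun hG y) z
  rw [G_apply, if_pos ⟨hy, hz⟩, Matrix.zero_apply, inv_eq_zero, Nat.cast_eq_zero] at entry_zero
  exact k_ne_zero (fun l hl => hn l (hl.trans_le hj)) entry_zero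

lemma clusterAvg_eq_G_self (x₀ : Vx d n) {i h : ℕ} (hi : i ≤ d) (hih : i ≤ h) :
    clusterAvg x₀ i h = G x₀ i i := by
  ext y z
  simp only [G_apply, clusterAvg_apply x₀ h hi, sameCluster_iff_of_le hih, clusterSize,
    hih.not_gt, if_false]

lemma clusterAvg_mul_G (hn : ∀ i < d, 2 ≤ n i) (x₀ : Vx d n) {i : ℕ} (hi : i ≤ d) (j : ℕ) :
    clusterAvg x₀ i i * G x₀ i j = G x₀ i j := by
  rw [clusterAvg_eq_G_self x₀ hi le_rfl, G_mul_G hn x₀ i hi, if_pos rfl]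

lemma G_mul_clusterAvg (hn : ∀ i < d, 2 ≤ n i) (x₀ : Vx d n) (i : ℕ) {j : ℕ} (hj : j ≤ d) :
    G x₀ i j * clusterAvg x₀ j j = G x₀ i j := by
  rw [clusterAvg_eq_G_self x₀ hj le_rfl, G_mul_G hn x₀ i hj, if_pos rfl]

lemma Es_mul_A_mul_Es_of_ne (hn : ∀ i < d, 2 ≤ n i) (x₀ : Vx d n) {i j : ℕ} (l : ℕ)
    (hj : j ≤ d) (hij : i ≠ j) :
    Es x₀ i * A d n l * Es x₀ j = if max i j = l then (k n j : ℂ) • G x₀ i j else 0 := by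
  have k_ne : (k n j : ℂ) ≠ 0 :=
    Nat.cast_ne_zero.2 (k_ne_zero fun i hi => hn i (hi.trans_le hj))
  ext y z
  rw [Es_mul_mul_Es_apply]
  by_cases hyz : delta x₀ y = i ∧ delta x₀ z = j
  · rw [if_pos hyz, A_apply_of_delta_ne l hij hyz.1 hyz.2]
    split_ifs
    · rw [Matrix.smul_apply, G_apply, if_pos hyz, smul_eq_mul, mul_inv_cancel₀ k_ne]
    · rfl
  · rw [if_neg hyz]
    split_ifs
    · rw [Matrix.smul_apply, G_apply, if_neg hyz, smul_zero]
    · rfl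

end MatrixUnits

section Idempotents

variable {d : ℕ} {n : ℕ → ℕ}

lemma clusterAvg_zero (x₀ : Vx d n) {i : ℕ} (hi : i ≤ d) : clusterAvg x₀ i 0 = Es x₀ i := by
  have size_one : clusterSize n i 0 = 1 := by
    by_cases hi0 : i = 0 <;> simp [clusterSize, k, hi0, Nat.pos_iff_ne_zero]
  ext y z
  rw [clusterAvg_apply x₀ 0 hi, size_one, Es, Matrix.of_apply]
  simp only [Nat.cast_one, inv_one]
  refine if_congr ?_ rfl rfl
  rw [SameCluster, Nat.le_zero, delta_eq_zero_iff]
  exact ⟨fun ⟨hy, _, hyz⟩ => ⟨hyz, hy⟩, fun ⟨hyz, hy⟩ => ⟨hy, hyz ▸ hy, hyz⟩⟩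

lemma sum_Es_mul_A_mul_Es (hn : ∀ i < d, 2 ≤ n i) (x₀ : Vx d n) {i : ℕ} (h : ℕ) (hi : i ≤ d) :
    ∑ j ∈ range (h + 1), Es x₀ i * A d n j * Es x₀ i =
      (clusterSize n i h : ℂ) • clusterAvg x₀ i h := by
  ext y z
  rw [← sum_mul, ← mul_sum, Es_mul_mul_Es_apply, Matrix.sum_apply, Matrix.smul_apply,
    clusterAvg_apply x₀ h hi, smul_ite, smul_zero, smul_eq_mul,
    mul_inv_cancel₀ (Nat.cast_ne_zero.2 (clusterSize_ne_zero hn x₀ h hi))]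
  simp [A, SameCluster, ← and_assoc, ite_and]

lemma F_eq_clusterAvg_sub (hn : ∀ i < d, 2 ≤ n i) (x₀ : Vx d n) {i h : ℕ} (hi : i ≤ d)
    (hhi : h < i) :
    F x₀ i h = clusterAvg x₀ i h - clusterAvg x₀ i (h + 1) := by
  have normalized {g : ℕ} (hgi : g < i) :
      (∑ j ∈ range (g + 1), (k n j : ℂ))⁻¹ • ∑ j ∈ range (g + 1), Es x₀ i * A d n j * Es x₀ i =
        clusterAvg x₀ i g := by
    have size_ne : (clusterSize n i g : ℂ) ≠ 0 :=
      Nat.cast_ne_zero.2 (clusterSize_ne_zero hn x₀ g hi)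
    rw [sum_Es_mul_A_mul_Es hn x₀ g hi, ← Nat.cast_sum, clusterSize, if_pos hgi] at *
    exact inv_smul_smul₀ size_ne _
  rw [F]
  split_ifs with hlt
  · rw [normalized hhi, normalized (by omega)]
  · obtain rfl : h + 1 = i := by omega
    rw [normalized hhi, clusterAvg_eq_G_self x₀ hi le_rfl]

lemma F_eq_zero_iff (hn : ∀ i < d, 2 ≤ n i) (x₀ : Vx d n) {i h : ℕ} (hi : i ≤ d) (hhi : h < i) :
    F x₀ i h = 0 ↔ h + 1 = i ∧ n h = 2 := by
  rw [F_eq_clusterAvg_sub hn x₀ hi hhi, sub_eq_zero,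
    clusterAvg_eq_clusterAvg_succ_iff hn x₀ hi hhi]

lemma F_mul_F_same (hn : ∀ i < d, 2 ≤ n i) (x₀ : Vx d n) {i h g : ℕ} (hi : i ≤ d) (hhi : h < i)
    (hgi : g < i) :
    F x₀ i h * F x₀ i g = if h = g then F x₀ i h else 0 := by
  rw [F_eq_clusterAvg_sub hn x₀ hi hhi, F_eq_clusterAvg_sub hn x₀ hi hgi,
    sub_succ_mul_sub_succ_of_mul_eq_max (clusterAvg_mul_clusterAvg_same x₀ i)]

lemma F_mul_F_of_ne (hn : ∀ i < d, 2 ≤ n i) (x₀ : Vx d n) {i j h g : ℕ} (hi : i ≤ d)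
    (hj : j ≤ d) (hhi : h < i) (hgj : g < j) (hij : i ≠ j) :
    F x₀ i h * F x₀ j g = 0 := by
  rw [F_eq_clusterAvg_sub hn x₀ hi hhi, F_eq_clusterAvg_sub hn x₀ hj hgj]
  simp only [sub_mul, mul_sub, clusterAvg_mul_clusterAvg_of_ne x₀ _ _ hij, sub_zero]

lemma F_mul_clusterAvg (hn : ∀ i < d, 2 ≤ n i) (x₀ : Vx d n) {i h : ℕ} (hi : i ≤ d)
    (hhi : h < i) (j : ℕ) :
    F x₀ i h * clusterAvg x₀ j j = 0 := by
  rw [F_eq_clusterAvg_sub hn x₀ hi hhi]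
  by_cases hij : i = j
  · subst hij
    exact sub_succ_mul_of_mul_eq_max (clusterAvg_mul_clusterAvg_same x₀ i) hhi
  · simp only [sub_mul, clusterAvg_mul_clusterAvg_of_ne x₀ _ _ hij, sub_zero]

lemma clusterAvg_mul_F (hn : ∀ i < d, 2 ≤ n i) (x₀ : Vx d n) {i h : ℕ} (hi : i ≤ d)
    (hhi : h < i) (j : ℕ) :
    clusterAvg x₀ j j * F x₀ i h = 0 := by
  rw [F_eq_clusterAvg_sub hn x₀ hi hhi]
  by_cases hij : j = i
  · subst hij
    exact mul_sub_succ_of_mul_eq_max (clusterAvg_mul_clusterAvg_same x₀ j) hhi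
  · simp only [mul_sub, clusterAvg_mul_clusterAvg_of_ne x₀ _ _ hij, sub_zero]

lemma F_mul_G (hn : ∀ i < d, 2 ≤ n i) (x₀ : Vx d n) {i h j : ℕ} (hi : i ≤ d) (hhi : h < i)
    (hj : j ≤ d) (l : ℕ) :
    F x₀ i h * G x₀ j l = 0 := by
  rw [← clusterAvg_mul_G hn x₀ hj, ← mul_assoc, F_mul_clusterAvg hn x₀ hi hhi, zero_mul]

lemma G_mul_F (hn : ∀ i < d, 2 ≤ n i) (x₀ : Vx d n) {i h l : ℕ} (hi : i ≤ d) (hhi : h < i)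
    (j : ℕ) (hl : l ≤ d) :
    G x₀ j l * F x₀ i h = 0 := by
  rw [← G_mul_clusterAvg hn x₀ j hl, mul_assoc, clusterAvg_mul_F hn x₀ hi hhi, mul_zero]

lemma Es_eq_G_add_sum_F (hn : ∀ i < d, 2 ≤ n i) (x₀ : Vx d n) {i : ℕ} (hi : i ≤ d) :
    Es x₀ i = G x₀ i i + ∑ h ∈ range i, F x₀ i h := by
  rw [sum_congr rfl fun h hh => F_eq_clusterAvg_sub hn x₀ hi (mem_range.1 hh), sum_range_sub',
    clusterAvg_zero x₀ hi, clusterAvg_eq_G_self x₀ hi le_rfl, add_sub_cancel]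

theorem isSplitFrame_G_F (hn : ∀ i < d, 2 ≤ n i) (x₀ : Vx d n) :
    IsSplitFrame (fun i j : Fin (d + 1) => G x₀ i j)
      fun p : Σ i : Fin (d + 1), Fin i => F x₀ p.1 p.2 where
  unit_mul_unit i j l m := by
    rw [G_mul_G hn x₀ i j.is_le]
    simp only [Fin.ext_iff]
  orthogonal :=
    { idem := fun ⟨i, h⟩ => by
        rw [IsIdempotentElem, F_mul_F_same hn x₀ i.is_le h.2 h.2, if_pos rfl]
      ortho := by
        rintro ⟨i, h⟩ ⟨j, g⟩ hne
        by_cases hij : i = j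
        · subst hij
          have hhg : (h : ℕ) ≠ g := fun heq => hne (by rw [Fin.ext heq])
          exact (F_mul_F_same hn x₀ i.is_le h.2 g.2).trans (if_neg hhg)
        · exact F_mul_F_of_ne hn x₀ i.is_le j.is_le h.2 g.2 (Fin.val_ne_of_ne hij) }
  unit_mul_idem i j p := G_mul_F hn x₀ p.1.is_le p.2.2 i j.is_le
  idem_mul_unit p i j := F_mul_G hn x₀ p.1.is_le p.2.2 i.is_le j
  sum_eq_one := by
    rw [Fintype.sum_sigma, ← sum_add_distrib, ← sum_Es x₀, ← Fin.sum_univ_eq_sum_range]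
    refine sum_congr rfl fun i _ => ?_
    rw [Es_eq_G_add_sum_F hn x₀ i.is_le, ← Fin.sum_univ_eq_sum_range]

end Idempotents

section Generation

variable {d : ℕ} {n : ℕ → ℕ}

lemma A_mem_Ter (x₀ : Vx d n) {i : ℕ} (hi : i ≤ d) : A d n i ∈ Ter x₀ :=
  Algebra.subset_adjoin (Or.inl ⟨⟨i, Nat.lt_succ_of_le hi⟩, rfl⟩)

lemma Es_mul_mul_Es_mem_Ter (x₀ : Vx d n) {i j : ℕ} (hi : i ≤ d) (hj : j ≤ d)
    {M : Matrix (Vx d n) (Vx d n) ℂ} (hM : M ∈ Ter x₀) :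
    Es x₀ i * M * Es x₀ j ∈ Ter x₀ :=
  have Es_mem {l : ℕ} (hl : l ≤ d) : Es x₀ l ∈ Ter x₀ :=
    Algebra.subset_adjoin (Or.inr ⟨⟨l, Nat.lt_succ_of_le hl⟩, rfl⟩)
  mul_mem (mul_mem (Es_mem hi) hM) (Es_mem hj)

lemma G_mem_Ter (x₀ : Vx d n) {i j : ℕ} (hi : i ≤ d) (hj : j ≤ d) : G x₀ i j ∈ Ter x₀ := by
  rw [G]
  split_ifs
  · exact Subalgebra.smul_mem _ (Es_mul_mul_Es_mem_Ter x₀ hi hj (A_mem_Ter x₀ hj)) _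
  · exact Subalgebra.smul_mem _ (Es_mul_mul_Es_mem_Ter x₀ hi hj (A_mem_Ter x₀ hi)) _
  · refine Subalgebra.smul_mem _ (Es_mul_mul_Es_mem_Ter x₀ hi hi ?_) _
    rw [← sum_A]
    exact sum_mem fun j hj => A_mem_Ter x₀ (mem_range_succ_iff.1 hj)

lemma F_mem_Ter (x₀ : Vx d n) {i h : ℕ} (hi : i ≤ d) (hhi : h < i) : F x₀ i h ∈ Ter x₀ := by
  have normalized_sum_mem (c : ℂ) {m : ℕ} (hm : m ≤ d + 1) :
      c • ∑ j ∈ range m, Es x₀ i * A d n j * Es x₀ i ∈ Ter x₀ :=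
    Subalgebra.smul_mem _ (sum_mem fun j hj => Es_mul_mul_Es_mem_Ter x₀ hi hi
      (A_mem_Ter x₀ (by rw [mem_range] at hj; omega))) _
  rw [F]
  split_ifs
  · exact sub_mem (normalized_sum_mem _ (by omega)) (normalized_sum_mem _ (by omega))
  · exact sub_mem (normalized_sum_mem _ (by omega)) (G_mem_Ter x₀ hi hi)

variable {S : Subalgebra ℂ (Matrix (Vx d n) (Vx d n) ℂ)} {x₀ : Vx d n}

lemma clusterAvg_mem_of_G_mem_of_F_mem (hn : ∀ i < d, 2 ≤ n i)
    (hG : ∀ i ≤ d, ∀ j ≤ d, G x₀ i j ∈ S) (hF : ∀ i ≤ d, ∀ h < i, F x₀ i h ∈ S)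
    {i : ℕ} (hi : i ≤ d) (h : ℕ) :
    clusterAvg x₀ i h ∈ S := by
  rcases le_total h i with hhi | hih
  · induction hhi using Nat.decreasingInduction with
    | self => exact clusterAvg_eq_G_self x₀ hi le_rfl ▸ hG i hi i hi
    | of_succ h hhi ih =>
      rw [← sub_add_cancel (clusterAvg x₀ i h) (clusterAvg x₀ i (h + 1)),
        ← F_eq_clusterAvg_sub hn x₀ hi hhi]
      exact add_mem (hF i hi h hhi) ih
  · exact clusterAvg_eq_G_self x₀ hi hih ▸ hG i hi i hi

lemma Es_mul_A_mul_Es_self_mem_of_G_mem_of_F_mem (hn : ∀ i < d, 2 ≤ n i)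
    (hG : ∀ i ≤ d, ∀ j ≤ d, G x₀ i j ∈ S) (hF : ∀ i ≤ d, ∀ h < i, F x₀ i h ∈ S)
    {i : ℕ} (hi : i ≤ d) (l : ℕ) :
    Es x₀ i * A d n l * Es x₀ i ∈ S := by
  have partial_sum_mem (m : ℕ) : ∑ j ∈ range m, Es x₀ i * A d n j * Es x₀ i ∈ S := by
    cases m with
    | zero => simp only [range_zero, sum_empty, zero_mem]
    | succ h =>
      rw [sum_Es_mul_A_mul_Es hn x₀ h hi]
      exact Subalgebra.smul_mem _ (clusterAvg_mem_of_G_mem_of_F_mem hn hG hF hi h) _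
  rw [← sum_range_succ_sub_sum (fun j => Es x₀ i * A d n j * Es x₀ i)]
  exact sub_mem (partial_sum_mem _) (partial_sum_mem _)

lemma A_mem_of_G_mem_of_F_mem (hn : ∀ i < d, 2 ≤ n i) (hG : ∀ i ≤ d, ∀ j ≤ d, G x₀ i j ∈ S)
    (hF : ∀ i ≤ d, ∀ h < i, F x₀ i h ∈ S) (l : ℕ) :
    A d n l ∈ S := by
  have block_sum : A d n l =
      ∑ i ∈ range (d + 1), ∑ j ∈ range (d + 1), Es x₀ i * A d n l * Es x₀ j := by
    simp only [← mul_sum, ← sum_mul, sum_Es, one_mul, mul_one]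
  rw [block_sum]
  refine sum_mem fun i hi => sum_mem fun j hj => ?_
  rw [mem_range_succ_iff] at hi hj
  by_cases hij : i = j
  · exact hij ▸ Es_mul_A_mul_Es_self_mem_of_G_mem_of_F_mem hn hG hF hi l
  · rw [Es_mul_A_mul_Es_of_ne hn x₀ l hj hij]
    split_ifs
    · exact Subalgebra.smul_mem _ (hG i hi j hj) _
    · exact zero_mem _

theorem Ter_le_of_G_mem_of_F_mem (hn : ∀ i < d, 2 ≤ n i) (hG : ∀ i ≤ d, ∀ j ≤ d, G x₀ i j ∈ S)
    (hF : ∀ i ≤ d, ∀ h < i, F x₀ i h ∈ S) :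
    Ter x₀ ≤ S := by
  refine Algebra.adjoin_le ?_
  rintro _ (⟨i, rfl⟩ | ⟨i, rfl⟩)
  · exact A_mem_of_G_mem_of_F_mem hn hG hF i
  · have := clusterAvg_mem_of_G_mem_of_F_mem hn hG hF i.is_le 0
    rwa [clusterAvg_zero x₀ i.is_le] at this

theorem Ter_eq_adjoin (hn : ∀ i < d, 2 ≤ n i) (x₀ : Vx d n) :
    Ter x₀ = Algebra.adjoin ℂ (Set.range (fun p : Fin (d + 1) × Fin (d + 1) => G x₀ p.1 p.2) ∪
      Set.range fun p : Σ i : Fin (d + 1), Fin i => F x₀ p.1 p.2) := by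
  refine le_antisymm (Ter_le_of_G_mem_of_F_mem hn (fun i hi j hj => ?_) fun i hi h hhi => ?_)
    (Algebra.adjoin_le ?_)
  · exact Algebra.subset_adjoin
      (Or.inl ⟨(⟨i, Nat.lt_succ_of_le hi⟩, ⟨j, Nat.lt_succ_of_le hj⟩), rfl⟩)
  · exact Algebra.subset_adjoin (Or.inr ⟨⟨⟨i, Nat.lt_succ_of_le hi⟩, ⟨h, hhi⟩⟩, rfl⟩)
  · rintro _ (⟨p, rfl⟩ | ⟨p, rfl⟩)
    · exact G_mem_Ter x₀ p.1.is_le p.2.is_le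
    · exact F_mem_Ter x₀ p.1.is_le p.2.2

end Generation

lemma card_sigma_fin_succ_eq_and (d : ℕ) (P : ℕ → Prop) [DecidablePred P] :
    Fintype.card {p : Σ i : Fin (d + 1), Fin i // (p.2 : ℕ) + 1 = p.1 ∧ P p.2} =
      #{i ∈ range d | P i} := by
  rw [Fintype.card_subtype]
  refine card_bij (fun p _ => p.2) ?_ ?_ ?_
  · rintro ⟨i, h⟩ hp
    obtain ⟨hhi : (h : ℕ) + 1 = i, hP⟩ := (mem_filter.1 hp).2
    exact mem_filter.2 ⟨mem_range.2 (Nat.lt_of_succ_le (hhi.trans_le i.is_le)), hP⟩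
  · rintro ⟨i, h⟩ hp ⟨j, g⟩ hq (hhg : (h : ℕ) = g)
    have hhi : (h : ℕ) + 1 = i := (mem_filter.1 hp).2.1
    have hgj : (g : ℕ) + 1 = j := (mem_filter.1 hq).2.1
    obtain rfl : i = j := Fin.ext (by omega)
    rw [Fin.ext hhg]
  · intro i hi
    obtain ⟨hid, hP⟩ := mem_filter.1 hi
    exact ⟨⟨⟨i + 1, Nat.succ_lt_succ (mem_range.1 hid)⟩, Fin.last i⟩, by simpa using hP, rfl⟩

lemma card_F_ne_zero {d : ℕ} {n : ℕ → ℕ} (hn : ∀ i < d, 2 ≤ n i) (x₀ : Vx d n)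
    [Fintype {p : Σ i : Fin (d + 1), Fin i // F x₀ p.1 p.2 ≠ 0}] :
    Fintype.card {p : Σ i : Fin (d + 1), Fin i // F x₀ p.1 p.2 ≠ 0} =
      d * (d + 1) / 2 - #{i ∈ range d | n i = 2} := by
  classical
  have card_total : Fintype.card (Σ i : Fin (d + 1), Fin i) = d * (d + 1) / 2 := by
    rw [Fintype.card_sigma]
    simp only [Fintype.card_fin]
    rw [Fin.sum_univ_eq_sum_range fun i => i, sum_range_id, mul_comm, Nat.add_sub_cancel]
  have zero_iff (p : Σ i : Fin (d + 1), Fin i) :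
      F x₀ p.1 p.2 = 0 ↔ (p.2 : ℕ) + 1 = p.1 ∧ n p.2 = 2 :=
    F_eq_zero_iff hn x₀ p.1.is_le p.2.2
  rw [← card_total, ← card_sigma_fin_succ_eq_and d fun i => n i = 2, ← Fintype.card_subtype_compl]
  exact Fintype.card_congr (Equiv.subtypeEquivRight fun p => not_congr (zero_iff p))

/-- the Terwilliger algebra `T(x₀)` of `K_{n_1} ≀ ⋯ ≀ K_{n_d}` is
isomorphic as a ℂ-algebra to `M_{d+1}(ℂ) ⊕ ℂ^{d(d+1)/2 - b}`, where
`b = |{i : n_i = 2}|`. -/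
theorem stmt6 (d : ℕ) (hd : 1 ≤ d) (n : ℕ → ℕ) (hn : ∀ i < d, 2 ≤ n i)
    (x₀ : Vx d n) :
    Nonempty
      ((Ter x₀) ≃ₐ[ℂ]
        (Matrix (Fin (d + 1)) (Fin (d + 1)) ℂ ×
          (Fin (d * (d + 1) / 2 - ((Finset.range d).filter fun i => n i = 2).card) → ℂ))) := by
  classical
  have card_idem : Fintype.card {p : Σ i : Fin (d + 1), Fin i // F x₀ p.1 p.2 ≠ 0} = _ :=
    card_F_ne_zero hn x₀
  obtain ⟨frameEquiv⟩ := (isSplitFrame_G_F hn x₀).nonempty_adjoin_algEquiv ℂ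
    fun i j => G_ne_zero hn x₀ i.is_le j.is_le
  rw [Ter_eq_adjoin hn x₀]
  exact ⟨frameEquiv.trans (AlgEquiv.prodCongr AlgEquiv.refl
    (AlgEquiv.piCongrLeft' ℂ (fun _ => ℂ) (Fintype.equivFinOfCardEq card_idem)))⟩
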